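/- Let G be a Moore graph of degree 57, let x, y be adjacent vertices of G, and let Γ be the induced subgraph of G on the vertices at distance 2 from both x and y. Let u, v, w be vertices of Γ with pairwise distances d(v,w) = d(u,w) = d(u,v) = 3 (distances in Γ). Then the number of vertices z of Γ with d(z,u) = d(z,v) = d(z,w) = 3 is 53. -/

import Mathlib

/-!
Write `V(Γ)` as a `56 × 56` grid: a vertex `z` of `Γ` has exactly one common neighbour `a(z)` with
`x` and exactly one common neighbour `b(z)` with `y`, and `z` is determined by `(a(z), b(z))`.
Two distinct vertices of `Γ` are at distance 3 in `Γ` exactly when they lie on a common line, that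
is, share their `a` or their `b` (`dist_eq_three_iff`): otherwise they are adjacent or their common
neighbour in `G` survives in `Γ`, while on a common line that neighbour has been deleted and a path
of length 3 is found by moving to a suitable neighbour. Three pairwise collinear vertices
of a grid lie on one line, and the points collinear with all three are the remaining points of this
line. The line through `c = a(u)` is `N(c)` without `x`, so there are `57 - 1 - 3 = 53` of
them (`ncard_on_line`).
-/

open SimpleGraph

set_option linter.unusedSectionVars false

namespace Moore57

variable {α : Type*} [Fintype α] [DecidableEq α] {G : SimpleGraph α} [DecidableRel G.Adj]

theorem no_triangle (hG : G.IsSRGWith 3250 57 0 1) {a b c : α}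
    (h1 : G.Adj a b) (h2 : G.Adj b c) (h3 : G.Adj a c) : False := by
  have h := hG.of_adj a c h3
  rw [Fintype.card_eq_zero_iff] at h
  exact h.false ⟨b, h1, h2.symm⟩

theorem common_unique (hG : G.IsSRGWith 3250 57 0 1) {a b c d : α} (hab : a ≠ b)
    (h1 : G.Adj a c) (h2 : G.Adj c b) (h3 : G.Adj a d) (h4 : G.Adj d b) : c = d := by
  have hn : ¬ G.Adj a b := fun h => no_triangle hG h1 h2 h
  have h := hG.of_not_adj hab hn
  obtain ⟨e, he⟩ := Fintype.card_eq_one_iff.mp h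
  have hc := he ⟨c, h1, h2.symm⟩
  have hd := he ⟨d, h3, h4.symm⟩
  exact congrArg Subtype.val (hc.trans hd.symm)

theorem exists_common (hG : G.IsSRGWith 3250 57 0 1) {a b : α} (hab : a ≠ b)
    (hn : ¬ G.Adj a b) : ∃ c, G.Adj a c ∧ G.Adj c b := by
  have h := hG.of_not_adj hab hn
  obtain ⟨⟨e, he⟩, -⟩ := Fintype.card_eq_one_iff.mp h
  exact ⟨e, he.1, he.2.symm⟩

theorem dist_eq_two_iff (hG : G.IsSRGWith 3250 57 0 1) {a b : α} :
    G.dist a b = 2 ↔ a ≠ b ∧ ¬ G.Adj a b := by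
  constructor
  · intro h
    refine ⟨?_, ?_⟩
    · rintro rfl
      simp at h
    · intro h'
      rw [SimpleGraph.dist_eq_one_iff_adj.mpr h'] at h
      omega
  · rintro ⟨hne, hn⟩
    obtain ⟨c, h1, h2⟩ := exists_common hG hne hn
    have hle := SimpleGraph.dist_le (Walk.cons h1 (Walk.cons h2 Walk.nil))
    have h0 : G.dist a b ≠ 0 :=
      (Walk.cons h1 (Walk.cons h2 Walk.nil)).reachable.dist_eq_zero_iff.not.mpr hne
    have h1' : G.dist a b ≠ 1 := fun h => hn (SimpleGraph.dist_eq_one_iff_adj.mp h)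
    simp at hle
    omega

/-- `z` is distinct from and non-adjacent to `x` and `y`. As `G` has diameter 2, this says that `z`
is at distance 2 from both. -/
def Far (G : SimpleGraph α) (x y z : α) : Prop :=
  (x ≠ z ∧ ¬ G.Adj x z) ∧ (y ≠ z ∧ ¬ G.Adj y z)

/-- `z` and `t` have a common neighbour among the neighbours of `p`; for `p = x` this says that
they lie in the same row of the grid, for `p = y` in the same column. -/
def Share (G : SimpleGraph α) (p z t : α) : Prop :=
  ∃ c, G.Adj p c ∧ G.Adj c z ∧ G.Adj c t

/-- `z` and `t` are distinct and lie on a common line of the grid. -/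
def Collin (G : SimpleGraph α) (x y z t : α) : Prop :=
  z ≠ t ∧ (Share G x z t ∨ Share G y z t)

/-- Two distinct vertices in the same row are joined by a path of length 3 all of whose vertices
are far from both `x` and `y`. -/
theorem exists_path_three (hG : G.IsSRGWith 3250 57 0 1) {x y z t : α}
    (hz : Far G x y z) (hz' : Far G x y t) (hne : z ≠ t) (hs : Share G x z t) :
    ∃ p q, Far G x y p ∧ Far G x y q ∧ G.Adj z p ∧ G.Adj p q ∧ G.Adj q t := by
  obtain ⟨c, hxc, hcz, hcz'⟩ := hs
  obtain ⟨⟨hxz, nxz⟩, hyz, nyz⟩ := hz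
  obtain ⟨⟨hxz', nxz'⟩, hyz', nyz'⟩ := hz'
  obtain ⟨b, hyb, hbz⟩ := exists_common hG hyz nyz
  obtain ⟨b', hyb', hbz'⟩ := exists_common hG hyz' nyz'
  -- `p` must avoid `a(z) = c`, `b(z) = b`, and the at most one neighbour of `z` in the column
  -- of `t`.
  obtain ⟨p, hzp, hpc, hpb, hpm⟩ :
      ∃ p, G.Adj z p ∧ p ≠ c ∧ p ≠ b ∧ ¬ G.Adj p b' := by
    obtain ⟨m, hm⟩ : ∃ m, ∀ p, G.Adj z p → G.Adj p b' → p = m := by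
      by_cases h : ∃ m, G.Adj z m ∧ G.Adj m b'
      · obtain ⟨m, h1, h2⟩ := h
        refine ⟨m, fun p h3 h4 => ?_⟩
        by_cases hzb : z = b'
        · subst hzb
          exact (nyz hyb').elim
        · exact common_unique hG hzb h3 h4 h1 h2
      · exact ⟨z, fun p h3 h4 => (h ⟨p, h3, h4⟩).elim⟩
    have hcard : ({c, b, m} : Finset α).card < (G.neighborFinset z).card := by
      have h57 : (G.neighborFinset z).card = 57 := hG.regular z
      have := Finset.card_le_three (a := c) (b := b) (c := m)
      omega
    obtain ⟨p, hp, hpn⟩ := Finset.exists_mem_notMem_of_card_lt_card hcard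
    simp only [Finset.mem_insert, Finset.mem_singleton, not_or] at hpn
    rw [SimpleGraph.mem_neighborFinset] at hp
    exact ⟨p, hp, hpn.1, hpn.2.1, fun h => hpn.2.2 (hm p hp h)⟩
  have hpx : x ≠ p := by
    rintro rfl
    exact nxz hzp.symm
  have hpy : y ≠ p := by
    rintro rfl
    exact nyz hzp.symm
  have npx : ¬ G.Adj x p := fun h => hpc (common_unique hG hxz h hzp.symm hxc hcz)
  have npy : ¬ G.Adj y p := fun h => hpb (common_unique hG hyz h hzp.symm hyb hbz)
  have hpz' : p ≠ t := by
    rintro rfl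
    exact no_triangle hG hcz hzp hcz'
  have npz' : ¬ G.Adj p t := by
    intro h
    exact hpc (common_unique hG hne hzp h hcz.symm hcz')
  obtain ⟨q, hpq, hqz'⟩ := exists_common hG hpz' npz'
  refine ⟨p, q, ⟨⟨hpx, npx⟩, hpy, npy⟩, ⟨⟨?_, ?_⟩, ?_, ?_⟩, hzp, hpq, hqz'⟩
  · rintro rfl
    exact nxz' hqz'
  · intro h
    have : q = c := common_unique hG hxz' h hqz' hxc hcz'
    subst this
    exact no_triangle hG hcz hzp hpq.symm
  · rintro rfl
    exact nyz' hqz'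
  · intro h
    have : q = b' := common_unique hG hyz' h hqz' hyb' hbz'
    subst this
    exact hpm hpq

theorem Far.swap {x y z : α} (h : Far G x y z) : Far G y x z := ⟨h.2, h.1⟩

theorem Collin.swap {x y z t : α} (h : Collin G x y z t) : Collin G y x z t :=
  ⟨h.1, h.2.symm⟩

/-- Vertices of `Γ` are at distance 3 in `Γ` exactly when they are distinct points on a common line
of the grid. -/
theorem dist_eq_three_iff (hG : G.IsSRGWith 3250 57 0 1) {x y : α} (S : Set α)
    (hS : ∀ z, z ∈ S ↔ Far G x y z) (z t : S) :
    (G.induce S).dist z t = 3 ↔ Collin G x y z t := by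
  have hz := (hS z).1 z.2
  have hz' := (hS t).1 t.2
  constructor
  · intro h
    have hne : (z : α) ≠ t := by
      intro h'
      rw [Subtype.ext h'] at h
      simp at h
    have hn : ¬ G.Adj z t := by
      intro h'
      have : (G.induce S).dist z t = 1 := SimpleGraph.dist_eq_one_iff_adj.mpr h'
      omega
    obtain ⟨c, h1, h2⟩ := exists_common hG hne hn
    refine ⟨hne, ?_⟩
    by_contra hcon
    rw [not_or] at hcon
    have hc : c ∈ S := by
      rw [hS]
      refine ⟨⟨?_, fun h' => hcon.1 ⟨c, h', h1.symm, h2⟩⟩, ?_,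
        fun h' => hcon.2 ⟨c, h', h1.symm, h2⟩⟩
      · rintro rfl
        exact hz.1.2 h1.symm
      · rintro rfl
        exact hz.2.2 h1.symm
    have e1 : (G.induce S).Adj z ⟨c, hc⟩ := h1
    have e2 : (G.induce S).Adj ⟨c, hc⟩ t := h2
    have := SimpleGraph.dist_le (Walk.cons e1 (Walk.cons e2 Walk.nil))
    simp at this
    omega
  · rintro ⟨hne, hs⟩
    -- The unique common neighbour of `z` and `t` in `G` is not in `S`.
    obtain ⟨c, hcS, hcz, hcz'⟩ : ∃ c, c ∉ S ∧ G.Adj c z ∧ G.Adj c t := by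
      rcases hs with ⟨c, h1, h2, h3⟩ | ⟨c, h1, h2, h3⟩
      · exact ⟨c, fun h => ((hS c).1 h).1.2 h1, h2, h3⟩
      · exact ⟨c, fun h => ((hS c).1 h).2.2 h1, h2, h3⟩
    obtain ⟨p, q, hp, hq, h1, h2, h3⟩ :
        ∃ p q, Far G x y p ∧ Far G x y q ∧ G.Adj z p ∧ G.Adj p q ∧ G.Adj q t := by
      rcases hs with hs | hs
      · exact exists_path_three hG hz hz' hne hs
      · obtain ⟨p, q, hp, hq, h⟩ := exists_path_three hG hz.swap hz'.swap hne hs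
        exact ⟨p, q, hp.swap, hq.swap, h⟩
    have e1 : (G.induce S).Adj z ⟨p, (hS p).2 hp⟩ := h1
    have e2 : (G.induce S).Adj ⟨p, (hS p).2 hp⟩ ⟨q, (hS q).2 hq⟩ := h2
    have e3 : (G.induce S).Adj ⟨q, (hS q).2 hq⟩ t := h3
    have hle := SimpleGraph.dist_le (Walk.cons e1 (Walk.cons e2 (Walk.cons e3 Walk.nil)))
    obtain ⟨W, hW⟩ :=
      (Walk.cons e1 (Walk.cons e2 (Walk.cons e3 Walk.nil))).reachable.exists_walk_length_eq_dist
    simp only [Walk.length_cons, Walk.length_nil] at hle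
    -- A shortest walk of length 0, 1 or 2 is excluded by inspecting its edges.
    match W, hW with
    | .nil, _ => exact (hne rfl).elim
    | .cons e .nil, _ => exact (no_triangle hG hcz (show G.Adj _ _ from e) hcz').elim
    | .cons (v := m) e (.cons e' .nil), _ =>
      have : c = m := common_unique hG hne hcz.symm hcz' (show G.Adj _ _ from e)
        (show G.Adj _ _ from e')
      exact (hcS (this ▸ m.2)).elim
    | .cons _ (.cons _ (.cons _ _)), hW =>
      simp only [Walk.length_cons] at hW
      omega

theorem Share.common (hG : G.IsSRGWith 3250 57 0 1) {x c u v : α} (hxu : x ≠ u)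
    (hxc : G.Adj x c) (hcu : G.Adj c u) (h : Share G x u v) : G.Adj c v := by
  obtain ⟨d, h1, h2, h3⟩ := h
  rwa [common_unique hG hxu hxc hcu h1 h2]

theorem Share.symm {x u v : α} (h : Share G x u v) : Share G x v u := by
  obtain ⟨d, h1, h2, h3⟩ := h
  exact ⟨d, h1, h3, h2⟩

/-- Distinct vertices in the same row are in different columns, so no vertex is in the column of
both. -/
theorem not_share_both (hG : G.IsSRGWith 3250 57 0 1) {x y c z u v : α} (hxy : G.Adj x y)
    (hyz : y ≠ z) (huv : u ≠ v) (hxc : G.Adj x c) (hcu : G.Adj c u) (hcv : G.Adj c v)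
    (h1 : Share G y z u) (h2 : Share G y z v) : False := by
  obtain ⟨b, hyb, hbz, hbu⟩ := h1
  have hbv := h2.common hG hyz hyb hbz
  have : b = c := common_unique hG huv hbu.symm hbv hcu.symm hcv
  subst this
  exact no_triangle hG hxy hyb hxc

/-- The count when `u` and `v` share a row: `w` is then in that row too, and the vertices collinear
with all three form the rest of the row. -/
theorem ncard_on_line (hG : G.IsSRGWith 3250 57 0 1) {x y u v w : α} (hxy : G.Adj x y)
    (hu : Far G x y u) (hv : Far G x y v) (hw : Far G x y w)
    (hvw : Collin G x y v w) (huw : Collin G x y u w) (huv : u ≠ v) (hs : Share G x u v) :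
    {z | Far G x y z ∧ Collin G x y z u ∧ Collin G x y z v ∧ Collin G x y z w}.ncard = 53 := by
  obtain ⟨c, hxc, hcu, hcv⟩ := hs
  -- Any vertex collinear with both `u` and `v` is in their row.
  have key : ∀ z, Far G x y z → Collin G x y z u → Collin G x y z v → G.Adj c z := by
    rintro z hz ⟨-, h1⟩ ⟨-, h2⟩
    rcases h1 with h1 | h1
    · exact h1.symm.common hG hu.1.1 hxc hcu
    · rcases h2 with h2 | h2
      · exact h2.symm.common hG hv.1.1 hxc hcv
      · exact (not_share_both hG hxy hz.2.1 huv hxc hcu hcv h1 h2).elim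
  have hcw : G.Adj c w := key w hw ⟨huw.1.symm, huw.2.imp Share.symm Share.symm⟩
    ⟨hvw.1.symm, hvw.2.imp Share.symm Share.symm⟩
  have hset : {z | Far G x y z ∧ Collin G x y z u ∧ Collin G x y z v ∧ Collin G x y z w} =
      ((G.neighborFinset c \ {x, u, v, w} : Finset α) : Set α) := by
    ext z
    simp only [Set.mem_ofPred_eq, Finset.coe_sdiff, Set.mem_sdiff, Finset.mem_coe,
      SimpleGraph.mem_neighborFinset, Finset.mem_insert, Finset.mem_singleton, not_or]
    constructor
    · rintro ⟨hz, h1, h2, h3⟩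
      exact ⟨key z hz h1 h2, hz.1.1.symm, h1.1, h2.1, h3.1⟩
    · rintro ⟨hcz, hzx, hzu, hzv, hzw⟩
      refine ⟨⟨⟨Ne.symm hzx, fun h => no_triangle hG hxc hcz h⟩, ?_, ?_⟩,
        ⟨hzu, Or.inl ⟨c, hxc, hcz, hcu⟩⟩, ⟨hzv, Or.inl ⟨c, hxc, hcz, hcv⟩⟩,
        ⟨hzw, Or.inl ⟨c, hxc, hcz, hcw⟩⟩⟩
      · rintro rfl
        exact no_triangle hG hxc hcz hxy
      · intro h
        have hcy : c ≠ y := by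
          rintro rfl
          exact hu.2.2 hcu
        exact hzx (common_unique hG hcy hcz h.symm hxc.symm hxy)
  rw [hset, Set.ncard_coe_finset, Finset.card_sdiff_of_subset]
  · have h57 : (G.neighborFinset c).card = 57 := hG.regular c
    have h4 : ({x, u, v, w} : Finset α).card = 4 := by
      have h1 := hu.1.1
      have h2 := hv.1.1
      have h3 := hw.1.1
      have h4 := huw.1
      have h5 := hvw.1
      rw [Finset.card_insert_of_notMem, Finset.card_insert_of_notMem, Finset.card_pair h5]
      · simp [huv, h4]
      · simp [h1, h2, h3]
    rw [h57, h4]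
  · intro z hz
    simp only [Finset.mem_insert, Finset.mem_singleton] at hz
    rw [SimpleGraph.mem_neighborFinset]
    rcases hz with rfl | rfl | rfl | rfl
    exacts [hxc.symm, hcu, hcv, hcw]

end Moore57

/-- Lemma 2(d). In the distance-regular graph `Γ` induced by a Moore graph of
degree 57 on the common distance-2 neighbors of two adjacent vertices `x, y`, if `u, v, w` have
pairwise distances `d(v,w) = d(u,w) = d(u,v) = 3`, then there are exactly 53 vertices `z` at
distance 3 from all of `u`, `v`, `w`. -/
theorem moore57_x333_all_eq_three
    {α : Type*} [Fintype α] [DecidableEq α] (G : SimpleGraph α) [DecidableRel G.Adj]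
    (hG : G.IsSRGWith 3250 57 0 1)
    (x y : α) (hxy : G.Adj x y)
    (Γ : SimpleGraph {v : α | G.dist x v = 2 ∧ G.dist y v = 2})
    (hΓ : Γ = G.induce {v : α | G.dist x v = 2 ∧ G.dist y v = 2})
    (u v w : {v : α | G.dist x v = 2 ∧ G.dist y v = 2})
    (hU : Γ.dist v w = 3) (hV : Γ.dist u w = 3) (hW : Γ.dist u v = 3) :
    {z : {v : α | G.dist x v = 2 ∧ G.dist y v = 2} |
      Γ.dist z u = 3 ∧ Γ.dist z v = 3 ∧ Γ.dist z w = 3}.ncard = 53 := by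
  subst hΓ
  have hS : ∀ z, z ∈ {v : α | G.dist x v = 2 ∧ G.dist y v = 2} ↔ Moore57.Far G x y z := by
    intro z
    simp only [Set.mem_ofPred_eq, Moore57.dist_eq_two_iff hG, Moore57.Far]
  have hd := Moore57.dist_eq_three_iff hG _ hS
  rw [hd] at hU hV hW
  have hu := (hS u).1 u.2
  have hv := (hS v).1 v.2
  have hw := (hS w).1 w.2
  have himg : Subtype.val '' {z : {v : α | G.dist x v = 2 ∧ G.dist y v = 2} |
      (G.induce {v : α | G.dist x v = 2 ∧ G.dist y v = 2}).dist z u = 3 ∧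
      (G.induce {v : α | G.dist x v = 2 ∧ G.dist y v = 2}).dist z v = 3 ∧
      (G.induce {v : α | G.dist x v = 2 ∧ G.dist y v = 2}).dist z w = 3} =
      {z : α | Moore57.Far G x y z ∧ Moore57.Collin G x y z u ∧ Moore57.Collin G x y z v ∧
        Moore57.Collin G x y z w} := by
    ext z
    simp only [Set.mem_image, Set.mem_ofPred_eq, hd]
    constructor
    · rintro ⟨z, h, rfl⟩
      exact ⟨(hS z).1 z.2, h⟩
    · rintro ⟨hz, h⟩
      exact ⟨⟨z, (hS z).2 hz⟩, h, rfl⟩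
  rw [← Set.ncard_image_of_injective _ Subtype.val_injective, himg]
  rcases hW.2 with hs | hs
  · exact Moore57.ncard_on_line hG hxy hu hv hw hU hV hW.1 hs
  · rw [← Moore57.ncard_on_line hG hxy.symm hu.swap hv.swap hw.swap hU.swap hV.swap hW.1 hs]
    congr 1
    ext z
    exact ⟨fun ⟨h, h1, h2, h3⟩ => ⟨h.swap, h1.swap, h2.swap, h3.swap⟩,
      fun ⟨h, h1, h2, h3⟩ => ⟨h.swap, h1.swap, h2.swap, h3.swap⟩⟩
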